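/- For every integer d ≥ 2 there exists a constant C > 0, depending only on d, such that for all integers n ≥ 3 and all integers j with 2 ≤ j ≤ √n: | n·∫_{[0,1]^d} e^{−n|x|}·(n|x|)^j/j! dx − (log n)^{d−1}/(d−1)! | ≤ C·(log j)·(log n)^{d−2}, where for x ∈ [0,1]^d we write |x| := Π_{i=1}^d x⁽ⁱ⁾. -/

import Mathlib

open MeasureTheory Real
noncomputable section

lemma aux_scale (h : ℝ → ENNReal) (hm : Measurable h) (t : ℝ) (ht : 0 < t) :
    ∫⁻ x in Set.Ioc (0:ℝ) 1, h (x * t) =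
      ENNReal.ofReal (t⁻¹) * ∫⁻ s in Set.Ioc (0:ℝ) t, h s := by
  have h1 : ∫⁻ x in Set.Ioc (0:ℝ) 1, h (x * t) =
      ∫⁻ x, (Set.Ioc (0:ℝ) t).indicator h (t * x) := by
    rw [← lintegral_indicator measurableSet_Ioc]
    congr 1
    ext x
    have : x ∈ Set.Ioc (0:ℝ) 1 ↔ t * x ∈ Set.Ioc (0:ℝ) t := by
      simp only [Set.mem_Ioc]
      constructor
      · rintro ⟨a, b⟩
        exact ⟨by positivity, by nlinarith⟩
      · rintro ⟨a, b⟩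
        exact ⟨by nlinarith [pos_of_mul_pos_right a ht.le], by nlinarith⟩
    by_cases hx : x ∈ Set.Ioc (0:ℝ) 1
    · rw [Set.indicator_of_mem hx, Set.indicator_of_mem (this.1 hx), mul_comm]
    · rw [Set.indicator_of_notMem hx, Set.indicator_of_notMem (fun h => hx (this.2 h))]
  rw [h1, ← lintegral_map (f := (Set.Ioc (0:ℝ) t).indicator h) (g := fun x => t * x)
    (hm.indicator measurableSet_Ioc) (by fun_prop),
    Real.map_volume_mul_left ht.ne', lintegral_smul_measure, lintegral_indicator measurableSet_Ioc,
    abs_of_pos (by positivity), smul_eq_mul]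

lemma aux_ftc (m : ℕ) (s : ℝ) (h0 : 0 < s) (h1 : s ≤ 1) :
    ∫⁻ t in Set.Ioc s 1, ENNReal.ofReal ((-log t)^m / (m.factorial : ℝ)) * ENNReal.ofReal t⁻¹ =
      ENNReal.ofReal ((-log s)^(m+1) / ((m+1).factorial : ℝ)) := by
  have hc : ContinuousOn (fun t : ℝ => (-log t)^m / (m.factorial : ℝ) * t⁻¹) (Set.Icc s 1) := by
    have : ∀ x ∈ Set.Icc s 1, x ≠ 0 := fun x hx => (h0.trans_le hx.1).ne'
    apply ContinuousOn.mul
    · apply ContinuousOn.div_const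
      apply ContinuousOn.pow
      exact (continuousOn_id.log this).neg
    · exact continuousOn_id.inv₀ this
  have hI : IntervalIntegrable (fun t : ℝ => (-log t)^m / (m.factorial : ℝ) * t⁻¹) volume s 1 :=
    hc.intervalIntegrable_of_Icc h1
  have hd : ∀ x ∈ Set.uIcc s 1, HasDerivAt (fun t : ℝ => -((-log t)^(m+1) / ((m+1).factorial : ℝ)))
      ((-log x)^m / (m.factorial : ℝ) * x⁻¹) x := by
    intro x hx
    rw [Set.uIcc_of_le h1] at hx
    have hx0 : x ≠ 0 := (h0.trans_le hx.1).ne'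
    have := ((((hasDerivAt_log hx0).neg).pow (m+1)).div_const ((m+1).factorial : ℝ)).neg
    refine HasDerivAt.congr_deriv this ?_
    rw [Nat.factorial_succ]
    have : (m.factorial : ℝ) ≠ 0 := by positivity
    have : (m:ℝ) + 1 ≠ 0 := by positivity
    push_cast
    simp
    field_simp
  have := intervalIntegral.integral_eq_sub_of_hasDerivAt hd hI
  rw [intervalIntegral.integral_of_le h1] at this
  simp only [log_one, neg_zero, ne_eq, Nat.add_eq_zero_iff, one_ne_zero, and_false,
    not_false_eq_true, zero_pow, zero_div, sub_neg_eq_add, zero_add] at this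
  rw [← this, ofReal_integral_eq_lintegral_ofReal]
  · apply setLIntegral_congr_fun measurableSet_Ioc
    intro t ht
    have : 0 < t := h0.trans ht.1
    have := log_nonpos this.le ht.2
    simp only
    rw [ENNReal.ofReal_mul]
    have : 0 ≤ -log t := by linarith
    positivity
  · exact (intervalIntegrable_iff_integrableOn_Ioc_of_le h1).1 hI
  · refine (ae_restrict_iff' measurableSet_Ioc).2 (Filter.Eventually.of_forall ?_)
    intro t ht
    have h2 : 0 < t := h0.trans ht.1
    have := log_nonpos h2.le ht.2
    have : 0 ≤ -log t := by linarith
    simp only [Pi.zero_apply]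
    positivity

lemma aux_dens (m : ℕ) (h : ℝ → ENNReal) (hm : Measurable h) :
    ∫⁻ x, h (∏ i, x i) ∂(Measure.pi fun _ : Fin (m+1) => volume.restrict (Set.Ioc (0:ℝ) 1)) =
      ∫⁻ t in Set.Ioc (0:ℝ) 1, h t * ENNReal.ofReal ((-log t)^m / (m.factorial : ℝ)) := by
  induction m generalizing h with
  | zero =>
    have := (measurePreserving_funUnique (volume.restrict (Set.Ioc (0:ℝ) 1)) (Fin 1)).lintegral_map_equiv
      h _
    simp [this]
    rfl
  | succ m ih =>
    set μ := volume.restrict (Set.Ioc (0:ℝ) 1) with hμ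
    have e := (measurePreserving_piFinSuccAbove (fun _ : Fin (m+2) => μ) 0)
    have e1 := e.lintegral_map_equiv (fun p : ℝ × (Fin (m+1) → ℝ) => h (p.1 * ∏ i, p.2 i)) _
    have e2 : ∫⁻ x, h (∏ i, x i) ∂(Measure.pi fun _ : Fin (m+1+1) => μ) =
        ∫⁻ p, h (p.1 * ∏ i, p.2 i) ∂(μ.prod (Measure.pi fun _ : Fin (m+1) => μ)) := by
      rw [e1]
      apply lintegral_congr
      intro x
      rw [Fin.prod_univ_succ]
      rfl
    rw [e2, lintegral_prod _ (by fun_prop)]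
    simp only
    have e3 : ∀ x : ℝ, ∫⁻ y, h (x * ∏ i, y i) ∂(Measure.pi fun _ : Fin (m+1) => μ) =
      ∫⁻ t, h (x * t) * ENNReal.ofReal ((-log t)^m / (m.factorial : ℝ)) ∂μ := fun x =>
      ih (fun t => h (x * t)) (by fun_prop)
    simp_rw [e3]
    rw [lintegral_lintegral_swap (by fun_prop)]
    have e4 : ∀ t ∈ Set.Ioc (0:ℝ) 1,
        ∫⁻ x, h (x * t) * ENNReal.ofReal ((-log t)^m / (m.factorial : ℝ)) ∂μ =
        ∫⁻ s, {p : ℝ × ℝ | p.2 < p.1}.indicator (fun p => h p.2 * (ENNReal.ofReal ((-log p.1)^m / (m.factorial : ℝ)) * ENNReal.ofReal p.1⁻¹)) (t, s) ∂μ := by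
      intro t ht
      rw [lintegral_mul_const _ (by fun_prop), aux_scale h hm t ht.1]
      have : ∀ s, {p : ℝ × ℝ | p.2 < p.1}.indicator (fun p => h p.2 * (ENNReal.ofReal ((-log p.1)^m / (m.factorial : ℝ)) * ENNReal.ofReal p.1⁻¹)) (t, s) = 
        (Set.Iio t).indicator h s * (ENNReal.ofReal ((-log t)^m / (m.factorial : ℝ)) * ENNReal.ofReal t⁻¹) := by
        intro s
        by_cases hs : s < t
        · rw [Set.indicator_of_mem (by exact hs), Set.indicator_of_mem (by exact hs)]
        · rw [Set.indicator_of_notMem (by exact hs), Set.indicator_of_notMem (by exact hs), zero_mul]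
      simp_rw [this]
      rw [lintegral_mul_const _ (hm.indicator measurableSet_Iio), lintegral_indicator measurableSet_Iio,
        hμ, Measure.restrict_restrict measurableSet_Iio]
      have hs : Set.Iio t ∩ Set.Ioc 0 1 = Set.Ioo 0 t := by
        ext s
        simp only [Set.mem_inter_iff, Set.mem_Iio, Set.mem_Ioc, Set.mem_Ioo]
        exact ⟨fun a => ⟨a.2.1, a.1⟩, fun a => ⟨a.2, a.1, a.2.le.trans ht.2⟩⟩
      rw [hs, setLIntegral_congr Ioo_ae_eq_Ioc]
      ring
    rw [hμ, setLIntegral_congr_fun measurableSet_Ioc e4, ← hμ, lintegral_lintegral_swap]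
    · rw [hμ]
      apply setLIntegral_congr_fun measurableSet_Ioc
      intro s hs
      simp only
      have : ∀ t, {p : ℝ × ℝ | p.2 < p.1}.indicator (fun p => h p.2 * (ENNReal.ofReal ((-log p.1)^m / (m.factorial : ℝ)) * ENNReal.ofReal p.1⁻¹)) (t, s) = 
        h s * (Set.Ioi s).indicator (fun t => ENNReal.ofReal ((-log t)^m / (m.factorial : ℝ)) * ENNReal.ofReal t⁻¹) t := by
        intro t
        by_cases hs : s < t
        · rw [Set.indicator_of_mem (by exact hs), Set.indicator_of_mem (by exact hs)]
        · rw [Set.indicator_of_notMem (by exact hs), Set.indicator_of_notMem (by exact hs), mul_zero]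
      simp_rw [this]
      rw [lintegral_const_mul _ (Measurable.indicator (by fun_prop) measurableSet_Ioi), lintegral_indicator measurableSet_Ioi,
        Measure.restrict_restrict measurableSet_Ioi]
      have hs' : Set.Ioi s ∩ Set.Ioc 0 1 = Set.Ioc s 1 := by
        ext t
        simp only [Set.mem_inter_iff, Set.mem_Ioi, Set.mem_Ioc]
        exact ⟨fun a => ⟨a.1, a.2.2⟩, fun a => ⟨a.1, hs.1.trans a.1, a.2⟩⟩
      rw [hs', aux_ftc m s hs.1 hs.2]
    · apply Measurable.aemeasurable
      apply Measurable.indicator (by fun_prop)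
      exact measurableSet_lt measurable_snd measurable_fst

lemma aux_int (m : ℕ) (h : ℝ → ℝ) (hm : Measurable h) (h0 : ∀ t, 0 ≤ t → 0 ≤ h t) :
    ∫ x in Set.Icc (0 : Fin (m+1) → ℝ) 1, h (∏ i, x i) =
      ∫ t in Set.Ioc (0:ℝ) 1, h t * ((-log t)^m / (m.factorial : ℝ)) := by
  have hr : (volume : Measure (Fin (m+1) → ℝ)).restrict (Set.Icc 0 1) =
      Measure.pi fun _ : Fin (m+1) => volume.restrict (Set.Ioc (0:ℝ) 1) := by
    rw [← Set.pi_univ_Icc, volume_pi, Measure.restrict_pi_pi]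
    congr 1
    ext1 i
    exact (Measure.restrict_congr_set Ioc_ae_eq_Icc).symm
  rw [integral_eq_lintegral_of_nonneg_ae, integral_eq_lintegral_of_nonneg_ae]
  · congr 1
    rw [hr, aux_dens m (fun t => ENNReal.ofReal (h t)) (by fun_prop)]
    apply setLIntegral_congr_fun measurableSet_Ioc
    intro t ht
    simp only
    rw [ENNReal.ofReal_mul (h0 t ht.1.le)]
  · refine (ae_restrict_iff' measurableSet_Ioc).2 (Filter.Eventually.of_forall ?_)
    intro t ht
    have := log_nonpos ht.1.le ht.2
    have : 0 ≤ -log t := by linarith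
    have := h0 t ht.1.le
    simp only [Pi.zero_apply]
    positivity
  · apply Measurable.aestronglyMeasurable; fun_prop
  · refine (ae_restrict_iff' measurableSet_Icc).2 (Filter.Eventually.of_forall ?_)
    intro x hx
    exact h0 _ (Finset.prod_nonneg fun i _ => hx.1 i)
  · apply Measurable.aestronglyMeasurable; fun_prop

lemma aux_gamma (k : ℕ) : IntegrableOn (fun u : ℝ => exp (-u) * u ^ k) (Set.Ioi 0) ∧
    ∫ u in Set.Ioi (0:ℝ), exp (-u) * u ^ k = (k.factorial : ℝ) := by
  have h1 := Real.GammaIntegral_convergent (s := (k:ℝ)+1) (by positivity)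
  have h2 := Real.Gamma_eq_integral (s := (k:ℝ)+1) (by positivity)
  rw [Real.Gamma_nat_eq_factorial] at h2
  simp only [add_sub_cancel_right, rpow_natCast] at h1 h2
  exact ⟨h1, h2.symm⟩

/-- pointwise bound -/
lemma aux_pt (m : ℕ) (L a u : ℝ) (j : ℝ) (hj : 2 ≤ j) (ha : a = log j) (hL : 1 ≤ L) (haL : a ≤ L)
    (hu : 0 < u) :
    |(if u ≤ exp L then (L - log u)^(m+1) else 0) - L^(m+1)| ≤
      (m+1) * (2 * a * L^m * ((m+1).factorial * exp 2 * (u / j + j / u))) := by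
  have hj0 : 0 < j := by linarith
  have ha2 : 1/2 ≤ a := by
    rw [ha]
    have := log_le_log (by norm_num) hj
    have := log_two_gt_d9
    linarith
  set y := |log (u / j)| with hy
  have hy0 : 0 ≤ y := abs_nonneg _
  have hw : |log u| ≤ a + y := by
    have : log u = a + log (u/j) := by rw [log_div hu.ne' hj0.ne', ha]; ring
    rw [this]
    refine (abs_add_le _ _).trans ?_
    rw [abs_of_pos (by linarith)]
  have hey : exp y ≤ u / j + j / u := by
    have h1 : 0 < u / j := by positivity
    have h2 : 0 < j / u := by positivity
    rcases abs_cases (log (u/j)) with h | h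
    · rw [hy, h.1, exp_log h1]; linarith
    · rw [hy, h.1, exp_neg, exp_log h1, inv_div]; linarith
  have hA : |(if u ≤ exp L then (L - log u)^(m+1) else 0) - L^(m+1)| ≤
      (m+1) * (|log u| * (L + |log u|)^m) := by
    split_ifs with h
    · refine (abs_pow_sub_pow_le _ _ _).trans ?_
      have h1 : |L - log u - L| = |log u| := by rw [← abs_neg]; congr 1; ring
      rw [h1]
      have : max |L - log u| |L| ≤ L + |log u| := by
        apply max_le
        · refine (abs_sub _ _).trans ?_
          rw [abs_of_pos (by linarith)]
        · rw [abs_of_pos (by linarith)]; linarith [abs_nonneg (log u)]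
      have := pow_le_pow_left₀ (by positivity) this m
      push_cast
      calc _ ≤ |log u| * (m+1) * (L + |log u|)^m := by
            gcongr
        _ = _ := by ring
    · have h1 : L < log u := (lt_log_iff_exp_lt hu).2 (not_le.1 h)
      have h2 : L ≤ |log u| := h1.le.trans (le_abs_self _)
      rw [zero_sub, abs_neg, abs_of_nonneg (by positivity), pow_succ, mul_comm]
      have h3 : L ^ m ≤ (L + |log u|)^m := by gcongr; linarith [abs_nonneg (log u)]
      have h4 : L * L^m ≤ |log u| * (L + |log u|)^m := by gcongr
      have : 0 ≤ |log u| * (L + |log u|)^m := by positivity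
      have : (0:ℝ) ≤ m := by positivity
      nlinarith
  refine hA.trans ?_
  have hB : (L + |log u|)^m ≤ (L * (2 + y))^m := by
    gcongr; nlinarith
  have hC : |log u| ≤ 2 * a * (2 + y) := by nlinarith
  have hD : (2 + y)^(m+1) ≤ (m+1).factorial * exp 2 * (u / j + j / u) := by
    have := Real.pow_div_factorial_le_exp (2+y) (by positivity) (m+1)
    rw [div_le_iff₀ (by positivity), exp_add] at this
    refine this.trans ?_
    calc _ = (m+1).factorial * exp 2 * exp y := by ring
      _ ≤ _ := by gcongr
  have ha0 : 0 ≤ a := by linarith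
  gcongr ((m:ℝ) + 1) * ?_
  calc _ ≤ (2 * a * (2 + y)) * (L * (2 + y))^m := by gcongr
    _ = 2 * a * L^m * (2+y)^(m+1) := by rw [mul_pow]; ring
    _ ≤ _ := by gcongr

lemma aux_main (m : ℕ) (n j : ℕ) (hn : 3 ≤ n) (hj : 2 ≤ j) (hjn : (j : ℝ) ≤ Real.sqrt n) :
      |(n : ℝ) * (∫ x in Set.Icc (0 : Fin (m+1+1) → ℝ) 1,
            Real.exp (-((n : ℝ) * ∏ i, x i)) * ((n : ℝ) * ∏ i, x i) ^ j /
              (Nat.factorial j : ℝ)) -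
          (Real.log n) ^ (m+1) / (Nat.factorial (m+1) : ℝ)| ≤
        (6 * (m+1) * exp 2) * Real.log j * (Real.log n) ^ m := by
  have hn0 : (0:ℝ) < n := by positivity
  have hn3 : (3:ℝ) ≤ n := by exact_mod_cast hn
  have hj2 : (2:ℝ) ≤ j := by exact_mod_cast hj
  have hj0 : (0:ℝ) < j := by linarith
  set L := log n with hL
  have hexpL : exp L = n := exp_log hn0
  have hL1 : 1 ≤ L := by
    rw [hL, le_log_iff_exp_le hn0]
    linarith [exp_one_lt_d9]
  have haL : log j ≤ L := by
    apply log_le_log hj0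
    have h1 : Real.sqrt n ≤ n := by
      rw [Real.sqrt_le_left hn0.le]; nlinarith
    linarith
  set M : ℝ := ((m+1).factorial : ℝ) with hM
  have hM0 : 0 < M := by positivity
  set J : ℝ := (j.factorial : ℝ) with hJ
  have hJ0 : 0 < J := by positivity
  let f : ℝ → ℝ := fun u => if u ≤ exp L then (L - log u)^(m+1) else 0
  have hfm : Measurable f := by
    apply Measurable.ite measurableSet_Iic <;> fun_prop
  let F : ℝ → ℝ := fun u => exp (-u) * u^j / J * (f u / M)
  have step1 : (n : ℝ) * (∫ x in Set.Icc (0 : Fin (m+1+1) → ℝ) 1,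
            Real.exp (-((n : ℝ) * ∏ i, x i)) * ((n : ℝ) * ∏ i, x i) ^ j / J) =
      ∫ u in Set.Ioi (0:ℝ), F u := by
    rw [aux_int (m+1) (fun t => Real.exp (-((n : ℝ) * t)) * ((n : ℝ) * t) ^ j / J) (by fun_prop)
      (fun t ht => by positivity)]
    have h2 := integral_comp_mul_left_Ioi F 0 hn0
    rw [mul_zero, smul_eq_mul] at h2
    have h3 : ∫ u in Set.Ioi (0:ℝ), F u = n * ∫ x in Set.Ioi (0:ℝ), F (n * x) := by
      rw [h2]; field_simp
    rw [h3]
    congr 1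
    rw [← integral_indicator measurableSet_Ioc, ← integral_indicator measurableSet_Ioi]
    congr 1
    ext t
    by_cases ht : 0 < t
    · rw [Set.indicator_of_mem (show t ∈ Set.Ioi (0:ℝ) from ht)]
      by_cases ht1 : t ≤ 1
      · rw [Set.indicator_of_mem (show t ∈ Set.Ioc (0:ℝ) 1 from ⟨ht, ht1⟩)]
        have : (n:ℝ) * t ≤ exp L := by rw [hexpL]; nlinarith
        simp only [F, f, if_pos this]
        rw [log_mul hn0.ne' ht.ne', ← hL]
        congr 3
        ring
      · rw [Set.indicator_of_notMem (fun h => ht1 h.2)]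
        have : ¬ (n:ℝ) * t ≤ exp L := by rw [hexpL]; push Not at *; nlinarith
        simp only [F, f, if_neg this]
        simp
    · rw [Set.indicator_of_notMem (fun h => ht h.1), Set.indicator_of_notMem (by exact ht)]
  rw [step1]
  obtain ⟨g1, g2⟩ := aux_gamma j
  obtain ⟨gp1, gp2⟩ := aux_gamma (j+1)
  obtain ⟨gm1, gm2⟩ := aux_gamma (j-1)
  let G : ℝ → ℝ := fun u => (exp (-u) * u^j) * (L^(m+1) / (M * J))
  have hG : ∫ u in Set.Ioi (0:ℝ), G u = L^(m+1) / M := by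
    simp only [G]
    rw [integral_mul_const, g2, ← hJ]
    field_simp
  have hGi : IntegrableOn G (Set.Ioi 0) := g1.mul_const _
  set K : ℝ := (m+1) * (2 * log j * L^m * exp 2) / J with hK
  let B : ℝ → ℝ := fun u => (K / j) * (exp (-u) * u^(j+1)) + (K * j) * (exp (-u) * u^(j-1))
  have hBi : IntegrableOn B (Set.Ioi 0) := (gp1.const_mul _).add (gm1.const_mul _)
  have hB : ∫ u in Set.Ioi (0:ℝ), B u ≤ 3 * (K * J) := by
    simp only [B]
    rw [integral_add (gp1.const_mul _) (gm1.const_mul _), integral_const_mul, integral_const_mul,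
      gp2, gm2]
    have h1 : (j:ℝ) * ((j-1).factorial : ℝ) = J := by
      rw [hJ]; exact_mod_cast Nat.mul_factorial_pred (by omega)
    have hK0 : 0 ≤ K := by
      have : 0 ≤ log j := log_nonneg (by linarith)
      positivity
    rw [mul_assoc, h1, Nat.factorial_succ]
    push_cast
    rw [← hJ]
    have h2 : ((j:ℝ) + 1) / j ≤ 2 := by rw [div_le_iff₀ hj0]; linarith
    have h3 : K / j * ((j + 1) * J) = (K * J) * ((j+1)/j) := by ring
    rw [h3]
    have : 0 ≤ K * J := by positivity
    nlinarith
  have hbd : ∀ u ∈ Set.Ioi (0:ℝ), ‖F u - G u‖ ≤ B u := by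
    intro u hu
    have hu : 0 < u := hu
    have h1 := aux_pt m L (log j) u j hj2 rfl hL1 haL hu
    have h2 : F u - G u = (exp (-u) * u^j / (J * M)) * (f u - L^(m+1)) := by
      simp only [F, G]; field_simp
    rw [h2, norm_mul, Real.norm_eq_abs, Real.norm_eq_abs, abs_of_nonneg (by positivity)]
    have h3 : B u = (exp (-u) * u^j / (J * M)) * ((m+1) * (2 * log j * L^m * (M * exp 2 * (u / j + j / u)))) := by
      simp only [B]
      obtain ⟨k, rfl⟩ : ∃ k, j = k + 1 := ⟨j-1, by omega⟩
      rw [hK]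
      simp only [Nat.add_sub_cancel]
      field_simp
      ring
    rw [h3]
    gcongr
  have hbd' := (ae_restrict_iff' (μ := volume) measurableSet_Ioi).2 (Filter.Eventually.of_forall hbd)
  have hFm : Measurable F := by fun_prop
  have hGm : Measurable G := by fun_prop
  have hFGi : IntegrableOn (fun u => F u - G u) (Set.Ioi 0) :=
    Integrable.mono' hBi (hFm.sub hGm).aestronglyMeasurable hbd'
  have hFi : IntegrableOn F (Set.Ioi 0) := by
    have := hFGi.add hGi
    refine this.congr (Filter.Eventually.of_forall fun u => ?_)
    simp
  rw [← hG, ← integral_sub hFi hGi]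
  refine (norm_integral_le_of_norm_le hBi hbd').trans (hB.trans (le_of_eq ?_))
  rw [hK]; field_simp; ring

theorem stmt15 {d : ℕ} (hd : 2 ≤ d) :
    ∃ C : ℝ, 0 < C ∧ ∀ n j : ℕ, 3 ≤ n → 2 ≤ j → (j : ℝ) ≤ Real.sqrt n →
      |(n : ℝ) * (∫ x in Set.Icc (0 : Fin d → ℝ) 1,
            Real.exp (-((n : ℝ) * ∏ i, x i)) * ((n : ℝ) * ∏ i, x i) ^ j /
              (Nat.factorial j : ℝ)) -
          (Real.log n) ^ (d - 1) / (Nat.factorial (d - 1) : ℝ)| ≤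
        C * Real.log j * (Real.log n) ^ (d - 2) := by
  obtain ⟨m, rfl⟩ : ∃ m, d = m + 1 + 1 := ⟨d - 2, by omega⟩
  exact ⟨6 * (m+1) * exp 2, by positivity, fun n j hn hj hjn => aux_main m n j hn hj hjn⟩
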